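/- Let G be a finite simple graph that is 2P4-free, let v1,…,v7 induce a C7 in G with vertex set N0 (indices modulo 7), and let N2 be the set of vertices outside N0 with no neighbor in N0. Fix an index i. Let x be a vertex with N0(x) equal to {v_i, v_{i+2}} or {v_{i-2}, v_i}, and let y be a vertex with N0(y) equal to {v_{i+3}, v_{i+5}} or {v_{i+1}, v_{i+3}}, such that x and y are non-adjacent. Let x' be a vertex of N2 adjacent to x but not to y, and let y' be a vertex of N2 adjacent to y but not to x. Then x' and y' are adjacent. -/

import Mathlib

/-- `a b c d` form an induced path on four vertices in `G`. -/
def IsInducedP4 {V : Type*} (G : SimpleGraph V) (a b c d : V) : Prop :=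
  a ≠ b ∧ a ≠ c ∧ a ≠ d ∧ b ≠ c ∧ b ≠ d ∧ c ≠ d ∧
  G.Adj a b ∧ G.Adj b c ∧ G.Adj c d ∧ ¬ G.Adj a c ∧ ¬ G.Adj a d ∧ ¬ G.Adj b d

/-- `G` is `2P₄`-free. -/
def TwoP4Free {V : Type*} (G : SimpleGraph V) : Prop :=
  ¬ ∃ a₁ a₂ a₃ a₄ b₁ b₂ b₃ b₄ : V,
      IsInducedP4 G a₁ a₂ a₃ a₄ ∧ IsInducedP4 G b₁ b₂ b₃ b₄ ∧
      ∀ u ∈ ({a₁, a₂, a₃, a₄} : Set V), ∀ w ∈ ({b₁, b₂, b₃, b₄} : Set V),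
        u ≠ w ∧ ¬ G.Adj u w

/-- The vertices `v 0, …, v (n-1)` form an induced cycle `C_n` in `G`. -/
def IsInducedCycle {V : Type*} (G : SimpleGraph V) (n : ℕ) (v : ZMod n → V) : Prop :=
  Function.Injective v ∧ ∀ i j : ZMod n, G.Adj (v i) (v j) ↔ (j = i + 1 ∨ i = j + 1)

/-!
Both kinds of neighbourhood allowed for `x` contain `v i` and lie in `{v (i - 2), v i, v (i + 2)}`,
and likewise for `y` around `v (i + 3)`. Hence `x', x, v i, v (i - 1)` and
`y', y, v (i + 3), v (i + 4)` are induced paths in every case, and the only pair that can be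
adjacent between them is `x', y'`. The same choice works around any cycle on which the centers of
`x` and `y` are far enough apart.
-/

section

variable {V : Type*} {G : SimpleGraph V}

theorem IsInducedP4.of_adj {a b c d : V} (hab : G.Adj a b) (hbc : G.Adj b c) (hcd : G.Adj c d)
    (hac : ¬ G.Adj a c) (had : ¬ G.Adj a d) (hbd : ¬ G.Adj b d) : IsInducedP4 G a b c d := by
  refine ⟨hab.ne, ?_, ?_, hbc.ne, ?_, hcd.ne, hab, hbc, hcd, hac, had, hbd⟩
  · rintro rfl
    exact had hcd
  · rintro rfl
    exact hbd hab.symm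
  · rintro rfl
    exact had hab

theorem IsInducedP4.exists_adj_of_mem {a b c d u : V} (h : IsInducedP4 G a b c d)
    (hu : u ∈ ({a, b, c, d} : Set V)) : ∃ w ∈ ({a, b, c, d} : Set V), G.Adj w u := by
  obtain ⟨-, -, -, -, -, -, hab, hbc, hcd, -⟩ := h
  rcases hu with rfl | rfl | rfl | rfl
  · exact ⟨b, by simp, hab.symm⟩
  · exact ⟨a, by simp, hab⟩
  · exact ⟨b, by simp, hbc⟩
  · exact ⟨c, by simp, hcd⟩

theorem TwoP4Free.exists_adj (hG : TwoP4Free G) {a₁ a₂ a₃ a₄ b₁ b₂ b₃ b₄ : V}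
    (ha : IsInducedP4 G a₁ a₂ a₃ a₄) (hb : IsInducedP4 G b₁ b₂ b₃ b₄) :
    ∃ u ∈ ({a₁, a₂, a₃, a₄} : Set V), ∃ w ∈ ({b₁, b₂, b₃, b₄} : Set V), G.Adj u w := by
  by_contra! hanti
  refine hG ⟨a₁, a₂, a₃, a₄, b₁, b₂, b₃, b₄, ha, hb, fun u hu w hw ↦ ⟨?_, hanti u hu w hw⟩⟩
  rintro rfl
  -- A common vertex has a neighbour on the first path, which is then adjacent to the second.
  obtain ⟨t, ht, htu⟩ := ha.exists_adj_of_mem hu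
  exact hanti t ht u hw htu

theorem TwoP4Free.adj_of_isInducedP4 (hG : TwoP4Free G) {x' x a b y' y c d : V}
    (hP : IsInducedP4 G x' x a b) (hQ : IsInducedP4 G y' y c d) (hxy : ¬ G.Adj x y)
    (hxy' : ¬ G.Adj x y') (hyx' : ¬ G.Adj y x')
    (hx' : ∀ t ∈ ({c, d} : Set V), ¬ G.Adj x' t) (hx : ∀ t ∈ ({c, d} : Set V), ¬ G.Adj x t)
    (hy' : ∀ s ∈ ({a, b} : Set V), ¬ G.Adj y' s) (hy : ∀ s ∈ ({a, b} : Set V), ¬ G.Adj y s)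
    (hst : ∀ s ∈ ({a, b} : Set V), ∀ t ∈ ({c, d} : Set V), ¬ G.Adj s t) : G.Adj x' y' := by
  obtain ⟨u, hu, w, hw, huw⟩ := hG.exists_adj hP hQ
  rw [Set.mem_insert_iff, Set.mem_insert_iff] at hu hw
  rcases hu with rfl | rfl | hu <;> rcases hw with rfl | rfl | hw
  · exact huw
  · exact absurd huw.symm hyx'
  · exact absurd huw (hx' w hw)
  · exact absurd huw hxy'
  · exact absurd huw hxy
  · exact absurd huw (hx w hw)
  · exact absurd huw.symm (hy' u hu)
  · exact absurd huw.symm (hy u hu)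
  · exact absurd huw (hst u hu w hw)

theorem zmod_intCast_ne_zero {n : ℕ} {m : ℤ} (hm : 0 < m) (hmn : m < n) : (m : ZMod n) ≠ 0 := by
  rw [Ne, ZMod.intCast_zmod_eq_zero_iff_dvd]
  exact fun hdvd ↦ (Int.le_of_dvd hm hdvd).not_gt hmn

/-- `x` is centered at `v i` if it is adjacent to `v i` and to no other vertex of the cycle `v`,
except possibly the two at distance two from `v i`. This covers the neighbourhoods
`{v i, v (i + 2)}` and `{v (i - 2), v i}` at once. -/
def IsCenteredAt (G : SimpleGraph V) {n : ℕ} (v : ZMod n → V) (i : ZMod n) (x : V) : Prop :=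
  G.Adj x (v i) ∧ ∀ j, G.Adj x (v j) → j = i - 2 ∨ j = i ∨ j = i + 2

variable {n : ℕ} {v : ZMod n → V} {i : ZMod n} {x : V}

theorem isCenteredAt_of_neighbors_eq (hv : Function.Injective v)
    (hx : {u | u ∈ Set.range v ∧ G.Adj x u} = {v i, v (i + 2)} ∨
      {u | u ∈ Set.range v ∧ G.Adj x u} = {v (i - 2), v i}) : IsCenteredAt G v i x := by
  have hadj : (∀ j, G.Adj x (v j) ↔ j = i ∨ j = i + 2) ∨
      (∀ j, G.Adj x (v j) ↔ j = i - 2 ∨ j = i) :=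
    hx.imp (fun h j ↦ by simpa [hv.eq_iff] using Set.ext_iff.1 h (v j))
      (fun h j ↦ by simpa [hv.eq_iff] using Set.ext_iff.1 h (v j))
  unfold IsCenteredAt
  grind

theorem IsCenteredAt.not_adj_of_adj (hx : IsCenteredAt G v i x) (hv : IsInducedCycle G n v)
    (hn : 4 ≤ n) {j : ZMod n} (hij : G.Adj (v i) (v j)) : ¬ G.Adj x (v j) := by
  have h3 : (3 : ZMod n) ≠ 0 := mod_cast zmod_intCast_ne_zero (m := 3) (by lia) (by lia)
  intro hxj
  have hdist_one := (hv.2 i j).1 hij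
  have hdist_even := hx.2 j hxj
  grind

theorem IsCenteredAt.isInducedP4 (hx : IsCenteredAt G v i x) (hv : IsInducedCycle G n v)
    (hn : 4 ≤ n) {x' : V} (hxx' : G.Adj x x') (hx' : ∀ j, ¬ G.Adj x' (v j)) {j : ZMod n}
    (hij : G.Adj (v i) (v j)) : IsInducedP4 G x' x (v i) (v j) :=
  IsInducedP4.of_adj hxx'.symm hx.1 hij (hx' i) (hx' j) (hx.not_adj_of_adj hv hn hij)

end

theorem stmt11_general {V : Type*} {G : SimpleGraph V} (hG : TwoP4Free G) {n k : ℕ}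
    (hk : 3 ≤ k) (hkn : k + 4 ≤ n) {v : ZMod n → V} (hv : IsInducedCycle G n v) {i : ZMod n}
    {x y x' y' : V}
    (hx : IsCenteredAt G v i x) (hy : IsCenteredAt G v (i + k) y) (hxy : ¬ G.Adj x y)
    (hx' : ∀ j, ¬ G.Adj x' (v j)) (hxx' : G.Adj x x') (hyx' : ¬ G.Adj y x')
    (hy' : ∀ j, ¬ G.Adj y' (v j)) (hyy' : G.Adj y y') (hxy' : ¬ G.Adj x y') :
    G.Adj x' y' := by
  have hP : IsInducedP4 G x' x (v i) (v (i - 1)) :=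
    hx.isInducedP4 hv (by lia) hxx' hx' ((hv.2 _ _).2 (by grind))
  have hQ : IsInducedP4 G y' y (v (i + k)) (v (i + k + 1)) :=
    hy.isInducedP4 hv (by lia) hyy' hy' ((hv.2 _ _).2 (by grind))
  -- An unwanted edge between the paths would force `k + m = 0` for some `-2 ≤ m ≤ 3`.
  have hfar (m : ℤ) (hm : -2 ≤ m) (hm' : m ≤ 3) : (k : ZMod n) + m ≠ 0 :=
    mod_cast zmod_intCast_ne_zero (n := n) (m := k + m) (by lia) (by lia)
  have hne : (k : ZMod n) - 2 ≠ 0 ∧ (k : ZMod n) - 1 ≠ 0 ∧ (k : ZMod n) ≠ 0 ∧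
      (k : ZMod n) + 1 ≠ 0 ∧ (k : ZMod n) + 2 ≠ 0 ∧ (k : ZMod n) + 3 ≠ 0 := by
    grind [hfar (-2), hfar (-1), hfar 0, hfar 1, hfar 2, hfar 3]
  refine hG.adj_of_isInducedP4 hP hQ hxy hxy' hyx' ?_ ?_ ?_ ?_ ?_ <;>
    simp only [Set.forall_mem_insert, Set.mem_singleton_iff, forall_eq]
  · exact ⟨hx' _, hx' _⟩
  · exact ⟨fun h ↦ by grind [hx.2 _ h], fun h ↦ by grind [hx.2 _ h]⟩
  · exact ⟨hy' _, hy' _⟩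
  · exact ⟨fun h ↦ by grind [hy.2 _ h], fun h ↦ by grind [hy.2 _ h]⟩
  · simp only [hv.2]
    grind

theorem stmt11 {V : Type*} [Fintype V] (G : SimpleGraph V) (h2P4 : TwoP4Free G)
    (v : ZMod 7 → V) (hv : IsInducedCycle G 7 v)
    (N2 : Set V) (hN2 : N2 = {u | u ∉ Set.range v ∧ ∀ j, ¬ G.Adj u (v j)})
    (i : ZMod 7) (x y : V)
    (hx : {u | u ∈ Set.range v ∧ G.Adj x u} = {v i, v (i + 2)} ∨
          {u | u ∈ Set.range v ∧ G.Adj x u} = {v (i - 2), v i})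
    (hy : {u | u ∈ Set.range v ∧ G.Adj y u} = {v (i + 3), v (i + 5)} ∨
          {u | u ∈ Set.range v ∧ G.Adj y u} = {v (i + 1), v (i + 3)})
    (hxy : ¬ G.Adj x y)
    (x' : V) (hx'N2 : x' ∈ N2) (hxx' : G.Adj x x') (hyx' : ¬ G.Adj y x')
    (y' : V) (hy'N2 : y' ∈ N2) (hyy' : G.Adj y y') (hxy' : ¬ G.Adj x y') :
    G.Adj x' y' := by
  subst hN2
  have hadd : i + (3 : ℕ) + 2 = i + 5 := by push_cast; ring
  have hsub : i + (3 : ℕ) - 2 = i + 1 := by push_cast; ring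
  exact stmt11_general h2P4 le_rfl le_rfl hv (isCenteredAt_of_neighbors_eq hv.1 hx)
    (isCenteredAt_of_neighbors_eq hv.1 (by rwa [hadd, hsub])) hxy
    hx'N2.2 hxx' hyx' hy'N2.2 hyy' hxy'
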